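/- Let L be a 2-trivial Lie algebra over a field K of characteristic zero satisfying [L,L] = L. Then L is semisimple. -/

import Mathlib

universe u v

section TwoCohomology

variable (K : Type u) [Field K]
variable (L : Type v) [LieRing L] [LieAlgebra K L]

/-- `f` is an alternating bilinear 2-cocycle on `L` with values in the `L`-module `V`:
it satisfies `f a a = 0` and the Chevalley–Eilenberg 2-cocycle identity. -/
def IsLieTwoCocycle {V : Type*} [AddCommGroup V] [Module K V] [LieRingModule L V]
    (f : L →ₗ[K] L →ₗ[K] V) : Prop :=
  (∀ a : L, f a a = 0) ∧
    ∀ x y z : L,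
      ⁅x, f y z⁆ - ⁅y, f x z⁆ + ⁅z, f x y⁆ - f ⁅x, y⁆ z + f ⁅x, z⁆ y - f ⁅y, z⁆ x = 0

/-- `f` is a 2-coboundary: `f (x, y) = x · g y − y · g x − g ⁅x, y⁆` for some linear `g`. -/
def IsLieTwoCoboundary {V : Type*} [AddCommGroup V] [Module K V] [LieRingModule L V]
    (f : L →ₗ[K] L →ₗ[K] V) : Prop :=
  ∃ g : L →ₗ[K] V, ∀ x y : L, f x y = ⁅x, g y⁆ - ⁅y, g x⁆ - g ⁅x, y⁆

/-- A finite-dimensional Lie algebra `L` is 2-trivial if `H²(L,V) = 0`, i.e. every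
alternating 2-cocycle is a 2-coboundary, for every finite-dimensional `L`-module `V`. -/
def IsTwoTrivial : Prop :=
  ∀ (V : Type u) [AddCommGroup V] [Module K V] [LieRingModule L V] [LieModule K L V]
    [FiniteDimensional K V] (f : L →ₗ[K] L →ₗ[K] V),
      IsLieTwoCocycle K L f → IsLieTwoCoboundary K L f

end TwoCohomology

/-!
By Levi's theorem the radical `R` of `L` is the kernel of an idempotent endomorphism `τ` of `L`, and
since `L = ⁅L, L⁆` it is nilpotent. With `p = 1 - τ : L → R` and `L` acting through `τ`, the
map `(x, y) ↦ p x ∧ p y` is a 2-cocycle of `L` with values in the finite-dimensional module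
`Λ²R ⧸ ∂Λ³R`. Evaluating a primitive of it on `R` shows that every 2-cocycle of `R` with trivial
coefficients is a coboundary. This is impossible for a nilpotent algebra of dimension at least `2`:
take a character `ξ` and a linear form `l` vanishing on `⁅ker ξ, ker ξ⁆` but not at some
`i ∈ ker ξ` with `⁅x, i⁆ ∈ ⁅ker ξ, ker ξ⁆`, where `ξ x = 1`; then `ξ ∧ l` is a cocycle that is not a
coboundary. So `dim R ≤ 1`, a perfect algebra acts trivially on `R`, and `R = 0`.
-/

open LieModule LieAlgebra Module TensorProduct

attribute [local instance] LieRing.ofAssociativeRing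

section Cocycles

variable {K L V W : Type*} [Field K] [LieRing L] [LieAlgebra K L]
  [AddCommGroup V] [Module K V] [LieRingModule L V]
  [AddCommGroup W] [Module K W] [LieRingModule L W]

variable (K L V) in
/-- The vanishing of `H²(L, V)` for a single coefficient module `V`. -/
def HasTrivialTwoCohomology : Prop :=
  ∀ f : L →ₗ[K] L →ₗ[K] V, IsLieTwoCocycle K L f → IsLieTwoCoboundary K L f

namespace IsLieTwoCocycle

variable {f g : L →ₗ[K] L →ₗ[K] V}

theorem neg_apply (hf : IsLieTwoCocycle K L f) (x y : L) : -f x y = f y x :=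
  LieModule.Cohomology.twoCochain_skew ⟨f, hf.1⟩ x y

theorem sub (hf : IsLieTwoCocycle K L f) (hg : IsLieTwoCocycle K L g) :
    IsLieTwoCocycle K L (f - g) := by
  refine ⟨fun a ↦ by simp [hf.1, hg.1], fun x y z ↦ ?_⟩
  have h := congrArg₂ (· - ·) (hf.2 x y z) (hg.2 x y z)
  rw [sub_zero] at h
  rw [← h]
  simp only [LinearMap.sub_apply, lie_sub]
  abel

theorem compr₂ (hf : IsLieTwoCocycle K L f) (φ : V →ₗ⁅K,L⁆ W) :
    IsLieTwoCocycle K L (f.compr₂ (φ : V →ₗ[K] W)) :=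
  ⟨fun a ↦ by simp [hf.1], fun x y z ↦ by simpa using congrArg φ (hf.2 x y z)⟩

theorem of_compr₂ {φ : V →ₗ⁅K,L⁆ W} (hφ : Function.Injective φ)
    (hf : IsLieTwoCocycle K L (f.compr₂ (φ : V →ₗ[K] W))) : IsLieTwoCocycle K L f :=
  ⟨fun a ↦ hφ (by simpa using hf.1 a), fun x y z ↦ hφ (by simpa using hf.2 x y z)⟩

end IsLieTwoCocycle

theorem isLieTwoCocycle_d₁₂ [LieModule K L V] (g : L →ₗ[K] V) :
    IsLieTwoCocycle K L (Cohomology.d₁₂ K L V g).1 :=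
  ⟨(Cohomology.d₁₂ K L V g).2, fun x y z ↦
    congr($(Cohomology.d₂₃_comp_d₁₂ (R := K) (L := L) (M := V)) g x y z)⟩

namespace IsLieTwoCoboundary

variable {f : L →ₗ[K] L →ₗ[K] V}

theorem compr₂ (hf : IsLieTwoCoboundary K L f) (φ : V →ₗ⁅K,L⁆ W) :
    IsLieTwoCoboundary K L (f.compr₂ (φ : V →ₗ[K] W)) := by
  obtain ⟨g, hg⟩ := hf
  exact ⟨(φ : V →ₗ[K] W) ∘ₗ g, fun x y ↦ by simp [hg]⟩

theorem of_sub_d₁₂ [LieModule K L V] {g : L →ₗ[K] V}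
    (h : IsLieTwoCoboundary K L (f - (Cohomology.d₁₂ K L V g).1)) :
    IsLieTwoCoboundary K L f := by
  obtain ⟨k, hk⟩ := h
  refine ⟨k + g, fun x y ↦ ?_⟩
  rw [← sub_add_cancel (f x y) ((Cohomology.d₁₂ K L V g).1 x y)]
  refine (congrArg (· + _) (hk x y)).trans ?_
  simp only [Cohomology.d₁₂_apply_coe_apply_apply, LinearMap.add_apply, lie_add]
  abel

end IsLieTwoCoboundary

namespace HasTrivialTwoCohomology

theorem of_equiv (h : HasTrivialTwoCohomology K L V) (e : V ≃ₗ⁅K,L⁆ W) :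
    HasTrivialTwoCohomology K L W := by
  intro f hf
  convert (h _ (hf.compr₂ (e.symm : W →ₗ⁅K,L⁆ V))).compr₂ (e : V →ₗ⁅K,L⁆ W)
  ext x y
  exact (e.apply_symm_apply (f x y)).symm

/-- A cocycle becomes a coboundary in `V ⧸ U`; lifting the primitive to `V` makes it `U`-valued. -/
theorem of_lieSubmodule [LieModule K L V] (U : LieSubmodule K L V)
    (hU : HasTrivialTwoCohomology K L U) (hQ : HasTrivialTwoCohomology K L (V ⧸ U)) :
    HasTrivialTwoCohomology K L V := by
  intro f hf
  obtain ⟨gQ, hgQ⟩ := hQ _ (hf.compr₂ (LieSubmodule.Quotient.mk' U))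
  obtain ⟨g, rfl⟩ := Module.projective_lifting_property
    (LieSubmodule.Quotient.mk' U : V →ₗ[K] V ⧸ U) gQ (LieSubmodule.Quotient.surjective_mk' U)
  obtain ⟨r, hr⟩ := U.toSubmodule.subtype.exists_leftInverse_of_injective
    (Submodule.ker_subtype U.toSubmodule)
  set f' := f - (Cohomology.d₁₂ K L V g).1
  have hf' : IsLieTwoCocycle K L f' := hf.sub (isLieTwoCocycle_d₁₂ g)
  have hmem (x y : L) : f' x y ∈ U := by
    refine (Submodule.Quotient.mk_eq_zero U.toSubmodule).mp ?_
    exact ((LieSubmodule.Quotient.mk' U).map_sub _ _).trans (sub_eq_zero.mpr (hgQ x y))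
  have hincl : (f'.compr₂ r).compr₂ (U.incl : U →ₗ[K] V) = f' := by
    ext x y
    exact congrArg Subtype.val congr($hr ⟨f' x y, hmem x y⟩)
  have hcob := hU (f'.compr₂ r) (.of_compr₂ U.injective_incl (hincl.symm ▸ hf'))
  exact .of_sub_d₁₂ (hincl ▸ hcob.compr₂ U.incl)

end HasTrivialTwoCohomology

end Cocycles

section TwoTrivial

variable {K : Type u} {L : Type v} [Field K] [LieRing L] [LieAlgebra K L]

theorem IsTwoTrivial.hasTrivialTwoCohomology (h : IsTwoTrivial K L) (V : Type*) [AddCommGroup V]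
    [Module K V] [LieRingModule L V] [LieModule K L V] [FiniteDimensional K V] :
    HasTrivialTwoCohomology K L V := by
  let e : V ≃ₗ[K] (Fin (finrank K V) → K) := (finBasis K V).equivFun
  let ρ : L →ₗ⁅K⁆ Module.End K (Fin (finrank K V) → K) := e.lieConj.toLieHom.comp (toEnd K L V)
  let _ : LieRingModule L (Fin (finrank K V) → K) := LieRingModule.compLieHom _ ρ
  have : LieModule K L (Fin (finrank K V) → K) := LieModule.compLieHom _ ρ
  refine .of_equiv (h (Fin (finrank K V) → K))
    (LieModuleEquiv.symm ⟨⟨e, fun {x v} ↦ ?_⟩, e.symm, e.left_inv, e.right_inv⟩)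
  exact congrArg (fun w ↦ e ⁅x, w⁆) (e.symm_apply_apply v).symm

theorem IsTwoTrivial.exists_primitive_comp (h : IsTwoTrivial K L) {H : Type*} [LieRing H]
    [LieAlgebra K H] (φ : L →ₗ⁅K⁆ H) {V : Type*} [AddCommGroup V] [Module K V]
    [LieRingModule H V] [LieModule K H V] [FiniteDimensional K V] (f : L →ₗ[K] L →ₗ[K] V)
    (halt : ∀ x, f x x = 0)
    (hf : ∀ x y z, ⁅φ x, f y z⁆ - ⁅φ y, f x z⁆ + ⁅φ z, f x y⁆
      - f ⁅x, y⁆ z + f ⁅x, z⁆ y - f ⁅y, z⁆ x = 0) :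
    ∃ g : L →ₗ[K] V, ∀ x y, f x y = ⁅φ x, g y⁆ - ⁅φ y, g x⁆ - g ⁅x, y⁆ := by
  let _ : LieRingModule L V := LieRingModule.compLieHom V φ
  have : LieModule K L V := LieModule.compLieHom V φ
  exact h.hasTrivialTwoCohomology V f ⟨halt, hf⟩

end TwoTrivial

section TrivialCoefficients

variable {K S V : Type*} [Field K] [LieRing S] [LieAlgebra K S]
  [AddCommGroup V] [Module K V] [LieRingModule S V] [LieModule.IsTrivial S V]

theorem isLieTwoCocycle_iff_of_isTrivial {f : S →ₗ[K] S →ₗ[K] V} :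
    IsLieTwoCocycle K S f ↔ (∀ x, f x x = 0) ∧ ∀ x y z, f ⁅x, y⁆ z + f ⁅y, z⁆ x = f ⁅x, z⁆ y := by
  refine and_congr_right fun _ ↦ forall₃_congr fun x y z ↦ ?_
  simp only [trivial_lie_zero, sub_self, zero_add, zero_sub]
  rw [← neg_eq_zero, ← sub_eq_zero (a := _ + _)]
  exact Eq.congr_left (by abel)

theorem isLieTwoCoboundary_iff_of_isTrivial {f : S →ₗ[K] S →ₗ[K] V} :
    IsLieTwoCoboundary K S f ↔ ∃ g : S →ₗ[K] V, ∀ x y, f x y = g ⁅x, y⁆ := by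
  simp only [IsLieTwoCoboundary, trivial_lie_zero, sub_self, zero_sub]
  exact (Equiv.neg _).exists_congr_left.trans (by simp)

variable [FiniteDimensional K S] [IsKilling K S]

/-- The Killing form identifies the cocycle with a derivation, and all derivations are inner. -/
theorem exists_apply_lie_eq_of_isKilling (B : S →ₗ[K] S →ₗ[K] K) (halt : ∀ x, B x x = 0)
    (hB : ∀ x y z, B ⁅x, y⁆ z + B ⁅y, z⁆ x = B ⁅x, z⁆ y) :
    ∃ μ : S →ₗ[K] K, ∀ x y, B x y = μ ⁅x, y⁆ := by
  have hκ := IsKilling.killingForm_nondegenerate K S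
  let δ : S →ₗ[K] S := (LinearMap.BilinForm.toDual (killingForm K S) hκ).symm.toLinearMap ∘ₗ B
  have hδ (x y : S) : killingForm K S (δ x) y = B x y :=
    LinearMap.BilinForm.apply_toDual_symm_apply (hB := hκ) (B x) y
  have hskew (x y : S) : B x y = -B y x :=
    (Cohomology.twoCochain_skew (⟨B, halt⟩ : Cohomology.twoCochain K S K) y x).symm
  let D : LieDerivation K S S :=
    { toLinearMap := δ
      leibniz' := fun a b ↦ by
        refine LinearMap.ker_eq_bot.mp (IsKilling.ker_killingForm_eq_bot K S)
          (LinearMap.ext fun y ↦ ?_)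
        rw [map_sub, LinearMap.sub_apply, hδ, traceForm_apply_lie_apply',
          traceForm_apply_lie_apply', hδ, hδ, hskew b, hskew a]
        linear_combination hB a b y }
  obtain ⟨d, hd⟩ := LieDerivation.IsKilling.exists_eq_ad D
  refine ⟨killingForm K S d, fun x y ↦ ?_⟩
  have hδd : δ x = ⁅d, x⁆ := congr($hd.symm x).trans (LieDerivation.ad_apply_apply ..)
  rw [← hδ, hδd, traceForm_apply_lie_apply]

theorem hasTrivialTwoCohomology_of_isTrivial [FiniteDimensional K V] :
    HasTrivialTwoCohomology K S V := by
  intro f hf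
  obtain ⟨halt, hf⟩ := isLieTwoCocycle_iff_of_isTrivial.mp hf
  let b := finBasis K V
  have hcoord (i) : ∃ μ : S →ₗ[K] K, ∀ x y, b.coord i (f x y) = μ ⁅x, y⁆ :=
    exists_apply_lie_eq_of_isKilling (f.compr₂ (b.coord i)) (fun x ↦ by simp [halt])
      fun x y z ↦ by simpa using congrArg (b.coord i) (hf x y z)
  choose μ hμ using hcoord
  refine isLieTwoCoboundary_iff_of_isTrivial.mpr
    ⟨b.equivFun.symm.toLinearMap ∘ₗ LinearMap.pi μ, fun x y ↦ ?_⟩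
  refine (b.equivFun.symm_apply_apply (f x y)).symm.trans (congrArg b.equivFun.symm ?_)
  exact funext fun i ↦ hμ i x y

end TrivialCoefficients

section Casimir

variable {K S V : Type*} [Field K] [LieRing S] [LieAlgebra K S]
  [AddCommGroup V] [Module K V] [LieRingModule S V] [LieModule K S V]

variable (K S V) in
/-- The action on `V` of the image of a tensor in `S ⊗ S` in the universal enveloping algebra. For
the invariant tensor of a nondegenerate form on `S` this is the Casimir operator. -/
noncomputable def casimir : S ⊗[K] S →ₗ[K] Module.End K V :=
  TensorProduct.lift ((LinearMap.mul K (Module.End K V)).compl₁₂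
    (toEnd K S V : S →ₗ[K] Module.End K V) (toEnd K S V : S →ₗ[K] Module.End K V))

theorem casimir_tmul_apply (a b : S) (v : V) : casimir K S V (a ⊗ₜ b) v = ⁅a, ⁅b, v⁆⁆ := rfl

theorem lie_casimir_apply (x : S) (t : S ⊗[K] S) (v : V) :
    ⁅x, casimir K S V t v⁆ = casimir K S V ⁅x, t⁆ v + casimir K S V t ⁅x, v⁆ := by
  induction t with
  | zero => simp
  | add t₁ t₂ h₁ h₂ =>
    simp only [map_add, lie_add, LinearMap.add_apply, h₁, h₂]
    abel
  | tmul a b =>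
    simp only [TensorProduct.LieModule.lie_tmul_right, map_add, LinearMap.add_apply,
      casimir_tmul_apply]
    rw [leibniz_lie x a, leibniz_lie x b, lie_add]
    abel

theorem trace_casimir (t : S ⊗[K] S) :
    LinearMap.trace K V (casimir K S V t) = TensorProduct.lift (traceForm K S V) t := by
  induction t with
  | zero => simp
  | add t₁ t₂ h₁ h₂ => simp only [map_add, h₁, h₂]
  | tmul a b => rfl

/-- The contraction of the first argument of a 2-cochain `f` against a tensor in `S ⊗ S`, as a
1-cochain. This is a homotopy between the Casimir operator and zero. -/
noncomputable def casimirContraction (f : S →ₗ[K] S →ₗ[K] V) : S ⊗[K] S →ₗ[K] S →ₗ[K] V :=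
  TensorProduct.lift ((LinearMap.llcomp K S V V).compl₁₂
    (toEnd K S V : S →ₗ[K] Module.End K V) f)

theorem casimirContraction_tmul_apply (f : S →ₗ[K] S →ₗ[K] V) (a b x : S) :
    casimirContraction f (a ⊗ₜ b) x = ⁅a, f b x⁆ := rfl

theorem IsLieTwoCocycle.casimir_apply {f : S →ₗ[K] S →ₗ[K] V} (hf : IsLieTwoCocycle K S f)
    (t : S ⊗[K] S) (x y : S) :
    casimir K S V t (f x y) =
      ⁅x, casimirContraction f t y⁆ - ⁅y, casimirContraction f t x⁆
        - casimirContraction f t ⁅x, y⁆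
        - casimirContraction f ⁅x, t⁆ y + casimirContraction f ⁅y, t⁆ x := by
  induction t with
  | zero => simp
  | add t₁ t₂ h₁ h₂ =>
    simp only [map_add, lie_add, LinearMap.add_apply, h₁, h₂]
    abel
  | tmul a b =>
    have h := congrArg (⁅a, ·⁆) (hf.2 b x y)
    rw [← hf.neg_apply b ⁅x, y⁆, ← lie_skew b x, ← lie_skew b y] at h
    simp only [map_neg, LinearMap.neg_apply, lie_sub, lie_add, lie_neg, lie_zero] at h
    simp only [TensorProduct.LieModule.lie_tmul_right, map_add, LinearMap.add_apply,
      casimir_tmul_apply, casimirContraction_tmul_apply]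
    rw [leibniz_lie x a, leibniz_lie y a, ← sub_eq_zero, ← h]
    abel

theorem IsLieTwoCocycle.isLieTwoCoboundary_compr₂_casimir {f : S →ₗ[K] S →ₗ[K] V}
    (hf : IsLieTwoCocycle K S f) {t : S ⊗[K] S} (ht : ∀ x : S, ⁅x, t⁆ = 0) :
    IsLieTwoCoboundary K S (f.compr₂ (casimir K S V t)) :=
  ⟨casimirContraction f t, fun x y ↦ by simp [hf.casimir_apply, ht]⟩

/-- The tensor is the image of the identity under `End V ≃ V ⊗ V` induced by `B`. -/
theorem exists_invariant_tensor [FiniteDimensional K V] {B : LinearMap.BilinForm K V}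
    (hB : B.Nondegenerate) (hinv : B.lieInvariant S) :
    ∃ t : V ⊗[K] V, (∀ x : S, ⁅x, t⁆ = 0) ∧ TensorProduct.lift B t = finrank K V := by
  let Φ : V ⊗[K] V ≃ₗ[K] Module.End K V :=
    (TensorProduct.congr (B.toDual hB) (.refl K V)).trans (dualTensorHomEquiv K V V)
  have hΦ (a b v : V) : Φ (a ⊗ₜ b) v = B a v • b := by
    simp [Φ, LinearMap.BilinForm.toDual_def]
  have hlie (x : S) (t : V ⊗[K] V) : Φ ⁅x, t⁆ = ⁅x, Φ t⁆ := by
    induction t with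
    | zero => simp
    | add t₁ t₂ h₁ h₂ => simp only [map_add, lie_add, h₁, h₂]
    | tmul a b =>
      ext v
      simp [hΦ, hinv x a v, add_comm, sub_eq_add_neg]
  have htrace (t : V ⊗[K] V) : LinearMap.trace K V (Φ t) = TensorProduct.lift B t := by
    induction t with
    | zero => simp
    | add t₁ t₂ h₁ h₂ => simp only [map_add, h₁, h₂]
    | tmul a b => simp [Φ, LinearMap.BilinForm.toDual_def]
  refine ⟨Φ.symm 1, fun x ↦ Φ.injective ?_, ?_⟩
  · ext v
    simp [hlie]
  · rw [← htrace, Φ.apply_symm_apply, LinearMap.trace_one]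

theorem exists_invariant_tensor_of_lieIdeal {B : LinearMap.BilinForm K S} (hinv : B.lieInvariant S)
    (J : LieIdeal K S) [FiniteDimensional K J] (hJ : (B.restrict J.toSubmodule).Nondegenerate) :
    ∃ t : S ⊗[K] S, (∀ x : S, ⁅x, t⁆ = 0) ∧ TensorProduct.lift B t = finrank K J := by
  obtain ⟨t, ht, hBt⟩ := exists_invariant_tensor (S := S) (V := J) hJ fun x a b ↦ hinv x a b
  have hlift : TensorProduct.lift B ∘ₗ TensorProduct.LieModule.mapIncl J J =
      TensorProduct.lift (B.restrict J.toSubmodule) := TensorProduct.ext' fun _ _ ↦ rfl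
  refine ⟨TensorProduct.LieModule.mapIncl J J t, fun x ↦ ?_, congr($hlift t).trans hBt⟩
  rw [← LieModuleHom.map_lie, ht, map_zero]

end Casimir

theorem finrank_quotient_lt_of_ne_bot {K L V : Type*} [Field K] [LieRing L] [AddCommGroup V]
    [Module K V] [LieRingModule L V] [FiniteDimensional K V]
    {U : LieSubmodule K L V} (hU : U ≠ ⊥) : finrank K (V ⧸ U) < finrank K V := by
  have hadd : finrank K (V ⧸ U) + finrank K U = finrank K V :=
    Submodule.finrank_quotient_add_finrank U.toSubmodule
  have hpos : finrank K U ≠ 0 := fun h ↦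
    hU ((LieSubmodule.toSubmodule_eq_bot U).mp (Submodule.finrank_eq_zero.mp h))
  lia

section Whitehead

variable {K S : Type*} [Field K] [LieRing S] [LieAlgebra K S] [FiniteDimensional K S]

theorem derivedSeries_one_eq_top_of_isKilling [IsKilling K S] : derivedSeries K S 1 = ⊤ := by
  set D := derivedSeries K S 1 with hD
  have hcompl : IsCompl D D.killingCompl := D.isCompl_killingCompl
  suffices D.killingCompl = ⊥ by simpa [this] using hcompl.sup_eq_top
  have habelian : IsLieAbelian D.killingCompl := by
    rw [LieSubmodule.lie_abelian_iff_lie_self_eq_bot, eq_bot_iff, ← hcompl.inf_eq_bot, hD]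
    exact le_inf (LieSubmodule.mono_lie le_top le_top) (LieSubmodule.lie_le_right _ _)
  exact IsKilling.ideal_eq_bot_of_isLieAbelian _

theorem exists_lieIdeal_restrict_nondegenerate [IsKilling K S] {B : LinearMap.BilinForm K S}
    (hsymm : B.IsSymm) (hinv : B.lieInvariant S) (hB : B ≠ 0) :
    ∃ J : LieIdeal K S, J ≠ ⊥ ∧ (B.restrict J.toSubmodule).Nondegenerate := by
  let R : LieIdeal K S := InvariantForm.orthogonal B hinv ⊤
  have hR {x : S} : x ∈ R ↔ ∀ y, B y x = 0 := by simp [R, InvariantForm.mem_orthogonal]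
  have hcompl : IsCompl R R.killingCompl := R.isCompl_killingCompl
  refine ⟨R.killingCompl, fun hbot ↦ hB ?_, ?_⟩
  · have hRtop : R = ⊤ := by simpa [hbot] using hcompl.sup_eq_top
    ext y x
    exact hR.mp (hRtop ▸ LieSubmodule.mem_top x) y
  · have hrefl : (B.restrict R.killingCompl.toSubmodule).IsRefl :=
      LinearMap.BilinForm.IsSymm.isRefl ⟨fun x y ↦ hsymm.eq x y⟩
    refine hrefl.nondegenerate_iff_separatingRight.mpr fun x hx ↦ ?_
    have hxR : (x : S) ∈ R := hR.mpr fun y ↦ by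
      obtain ⟨a, ha, b, hb, rfl⟩ := (LieSubmodule.mem_sup R R.killingCompl y).mp
        (hcompl.sup_eq_top ▸ LieSubmodule.mem_top y)
      rw [map_add, LinearMap.add_apply, ← hsymm.eq, hR.mp ha, zero_add]
      exact hx ⟨b, hb⟩
    have hxbot : (x : S) ∈ R ⊓ R.killingCompl := ⟨hxR, x.2⟩
    rw [hcompl.inf_eq_bot] at hxbot
    exact Subtype.ext ((LieSubmodule.mem_bot _).mp hxbot)

variable [CharZero K]
variable {V : Type*} [AddCommGroup V] [Module K V] [LieRingModule S V] [LieModule K S V]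
  [FiniteDimensional K V]

theorem isTrivial_of_traceForm_eq_zero [IsKilling K S] [IsIrreducible K S V]
    (h : traceForm K S V = 0) : LieModule.IsTrivial S V := by
  have : LieModule.IsNilpotent (derivedSeries K S 1) V :=
    isNilpotent_derivedSeries_of_traceForm_eq_zero h
  have : Nontrivial V := nontrivial_of_isIrreducible K S V
  have := nontrivial_max_triv_of_isNilpotent K (derivedSeries K S 1) V
  obtain ⟨⟨w, hw⟩, hw0⟩ := exists_ne (0 : maxTrivSubmodule K (derivedSeries K S 1) V)
  rw [LieModule.mem_maxTrivSubmodule] at hw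
  have hwS : w ∈ maxTrivSubmodule K S V := fun x ↦
    hw ⟨x, derivedSeries_one_eq_top_of_isKilling (K := K) (S := S) ▸ LieSubmodule.mem_top x⟩
  rw [isTrivial_iff_max_triv_eq_top (R := K)]
  refine (IsSimpleOrder.eq_bot_or_eq_top _).resolve_left fun hbot ↦ hw0 (Subtype.ext ?_)
  rwa [hbot, LieSubmodule.mem_bot] at hwS

/-- Schur's lemma makes the Casimir operator invertible, and it maps cocycles to coboundaries. -/
theorem hasTrivialTwoCohomology_of_traceForm_ne_zero [IsKilling K S] [IsIrreducible K S V]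
    (h : traceForm K S V ≠ 0) : HasTrivialTwoCohomology K S V := by
  obtain ⟨J, hJ, hnondeg⟩ := exists_lieIdeal_restrict_nondegenerate
    ⟨fun x y ↦ traceForm_comm K S V x y⟩ (traceForm_lieInvariant K S V) h
  obtain ⟨t, ht, htrace⟩ := exists_invariant_tensor_of_lieIdeal
    (traceForm_lieInvariant K S V) J hnondeg
  let C : V →ₗ⁅K,S⁆ V :=
    { casimir K S V t with
      map_lie' := fun {x v} ↦ by simpa [ht] using (lie_casimir_apply x t v).symm }
  have hC : casimir K S V t ≠ 0 := fun h0 ↦ by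
    rw [← trace_casimir, h0, map_zero, eq_comm, Nat.cast_eq_zero] at htrace
    exact hJ ((LieSubmodule.toSubmodule_eq_bot J).mp (Submodule.finrank_eq_zero.mp htrace))
  have hinj : Function.Injective C := by
    rw [← LieModuleHom.ker_eq_bot]
    refine (IsSimpleOrder.eq_bot_or_eq_top C.ker).resolve_right fun htop ↦ hC ?_
    ext v
    exact LieModuleHom.mem_ker.mp (htop ▸ LieSubmodule.mem_top v)
  let e : V ≃ₗ⁅K,S⁆ V := { C, LinearEquiv.ofInjectiveEndo (C : V →ₗ[K] V) hinj with }
  intro f hf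
  convert (hf.isLieTwoCoboundary_compr₂_casimir ht).compr₂ (e.symm : V →ₗ⁅K,S⁆ V)
  ext x y
  exact (e.symm_apply_apply (f x y)).symm

theorem hasTrivialTwoCohomology_of_isIrreducible [IsKilling K S] [IsIrreducible K S V] :
    HasTrivialTwoCohomology K S V := by
  by_cases h : traceForm K S V = 0
  · have := isTrivial_of_traceForm_eq_zero h
    exact hasTrivialTwoCohomology_of_isTrivial
  · exact hasTrivialTwoCohomology_of_traceForm_ne_zero h

/-- Whitehead's second lemma. -/
theorem hasTrivialTwoCohomology_of_isKilling [IsKilling K S] : HasTrivialTwoCohomology K S V := by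
  induction hn : finrank K V using Nat.strong_induction_on generalizing V with
  | _ n ih =>
    subst hn
    rcases subsingleton_or_nontrivial V with hV | hV
    · have : LieModule.IsTrivial S V := ⟨fun _ _ ↦ Subsingleton.elim _ _⟩
      exact hasTrivialTwoCohomology_of_isTrivial
    by_cases hirr : ∀ U : LieSubmodule K S V, U ≠ ⊥ → U = ⊤
    · have := IsIrreducible.mk hirr
      exact hasTrivialTwoCohomology_of_isIrreducible
    push Not at hirr
    obtain ⟨U, hbot, htop⟩ := hirr
    have hltV : finrank K U < finrank K V :=
      Submodule.finrank_lt (mt (LieSubmodule.toSubmodule_eq_top U).mp htop)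
    exact .of_lieSubmodule U (ih _ hltV rfl) (ih _ (finrank_quotient_lt_of_ne_bot hbot) rfl)

end Whitehead

section Quotient

variable {K L Q : Type*} [Field K] [LieRing L] [LieAlgebra K L] [LieRing Q] [LieAlgebra K Q]

/-- The quotient map by a Lie ideal as a homomorphism of Lie algebras, whereas
`LieSubmodule.Quotient.mk'` is a homomorphism of Lie modules. -/
def quotientLieHom (I : LieIdeal K L) : L →ₗ⁅K⁆ L ⧸ I where
  toLinearMap := I.toSubmodule.mkQ
  map_lie' {x y} := LieSubmodule.Quotient.mk_bracket I x y

theorem quotientLieHom_surjective (I : LieIdeal K L) : Function.Surjective (quotientLieHom I) :=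
  LieSubmodule.Quotient.surjective_mk' I

theorem ker_quotientLieHom (I : LieIdeal K L) : (quotientLieHom I).ker = I := by
  ext x
  exact LieHom.mem_ker.trans (LieSubmodule.Quotient.mk_eq_zero I)

/-- The homomorphism on `L ⧸ I` induced by a homomorphism of Lie algebras that vanishes on `I`. -/
def quotientLieLift (I : LieIdeal K L) (p : L →ₗ⁅K⁆ Q) (hI : I ≤ p.ker) : L ⧸ I →ₗ⁅K⁆ Q where
  toLinearMap := I.toSubmodule.liftQ p hI
  map_lie' {x y} := by
    obtain ⟨x, rfl⟩ := quotientLieHom_surjective I x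
    obtain ⟨y, rfl⟩ := quotientLieHom_surjective I y
    exact p.map_lie x y

theorem isSolvable_ker_quotientLieLift {I : LieIdeal K L} {p : L →ₗ⁅K⁆ Q} [IsSolvable p.ker]
    (hI : I ≤ p.ker) : IsSolvable (quotientLieLift I p hI).ker := by
  have hle : (quotientLieLift I p hI).ker.toLieSubalgebra ≤
      ((quotientLieHom I).comp p.ker.incl).range := by
    intro x hx
    obtain ⟨y, rfl⟩ := quotientLieHom_surjective I x
    exact ⟨⟨y, hx⟩, rfl⟩
  exact (LieSubalgebra.inclusion_injective hle).lieAlgebra_isSolvable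

theorem hasTrivialRadical_quotient_radical [FiniteDimensional K L] :
    HasTrivialRadical K (L ⧸ radical K L) := by
  refine (hasTrivialRadical_iff_no_abelian_ideals K _).mpr fun I hI ↦ ?_
  let π := quotientLieHom (radical K L)
  have hderived : derivedSeriesOfIdeal K L 1 (I.comap π) ≤ radical K L := by
    refine (LieSubmodule.lie_le_iff _ _ _).mpr fun x hx y hy ↦ ?_
    refine (LieSubmodule.Quotient.mk_eq_zero _).mp ?_
    exact (π.map_lie x y).trans (congrArg Subtype.val (hI.trivial ⟨π x, hx⟩ ⟨π y, hy⟩))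
  have hsolvable : IsSolvable (I.comap π) := by
    obtain ⟨k, hk⟩ := IsSolvable.solvable K (radical K L)
    refine IsSolvable.mk (R := K) (k := k + 1) ?_
    rw [LieIdeal.derivedSeries_eq_bot_iff, derivedSeriesOfIdeal_add] at *
    exact eq_bot_mono (derivedSeriesOfIdeal_mono hderived k) hk
  refine (LieSubmodule.eq_bot_iff I).mpr fun x hx ↦ ?_
  obtain ⟨y, rfl⟩ := quotientLieHom_surjective _ x
  exact (LieSubmodule.Quotient.mk_eq_zero _).mpr
    ((LieIdeal.solvable_iff_le_radical K L _).mp hsolvable hx)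

end Quotient

section Levi

variable {K S L Q : Type*} [Field K] [CharZero K] [LieRing S] [LieAlgebra K S]
  [FiniteDimensional K S] [IsKilling K S] [LieRing L] [LieAlgebra K L] [FiniteDimensional K L]
  [LieRing Q] [LieAlgebra K Q]

theorem exists_section_of_isLieAbelian_ker (p : L →ₗ⁅K⁆ S) (hp : Function.Surjective p)
    [IsLieAbelian p.ker] : ∃ s : S →ₗ⁅K⁆ L, ∀ x, p (s x) = x := by
  let E : Extension K p.ker S := (isExtension_of_surjective p hp).extension
  let _ : LieRingModule S p.ker := E.ringModuleOf
  have : LieModule K S p.ker := E.lieModuleOf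
  obtain ⟨s, hs⟩ := (p : L →ₗ[K] S).exists_rightInverse_of_surjective
    (LinearMap.range_eq_top.mpr hp)
  have hps : Function.LeftInverse E.proj s := fun x ↦ congr($hs x)
  have htoKer (a : p.ker) : E.toKer.symm a = a := (E.toKer.symm_apply_eq).mpr rfl
  have hlie (x : S) (a : p.ker) : (⁅x, a⁆ : p.ker) = ⁅s x, (a : L)⁆ := by
    conv_lhs => rw [← hps x]
    exact congrArg Subtype.val ((E.ringModuleOf_bracket_proj a (s x)).trans (htoKer _))
  have hcocycle : IsLieTwoCocycle K S (E.twoCocycleOf hps).1.1 :=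
    ⟨(E.twoCocycleOf hps).1.2, fun x y z ↦ congr($((E.twoCocycleOf hps).2) x y z)⟩
  obtain ⟨g, hg⟩ := hasTrivialTwoCohomology_of_isKilling _ hcocycle
  have hdefect (x y : S) : ⁅s x, s y⁆ - s ⁅x, y⁆ =
      ⁅s x, (g y : L)⁆ - ⁅s y, (g x : L)⁆ - g ⁅x, y⁆ := by
    rw [← hlie, ← hlie]
    exact congrArg Subtype.val ((htoKer _).symm.trans (hg x y))
  have habelian (x y : S) : ⁅(g x : L), (g y : L)⁆ = 0 :=
    congrArg Subtype.val (trivial_lie_zero p.ker p.ker (g x) (g y))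
  refine ⟨⟨s - p.ker.toSubmodule.subtype ∘ₗ g, fun {x y} ↦ ?_⟩, fun x ↦ ?_⟩
  · change s ⁅x, y⁆ - (g ⁅x, y⁆ : L) = ⁅s x - (g x : L), s y - (g y : L)⁆
    rw [lie_sub, sub_lie, sub_lie, habelian, ← lie_skew (g x : L), sub_zero,
      eq_add_of_sub_eq (hdefect x y)]
    abel
  · change p (s x - (g x : L)) = x
    rw [map_sub, LieHom.mem_ker.mp (g x).2, sub_zero]
    exact hps x

/-- Pulling `p` back along `σ` reduces the claim to splitting an extension of `S`. -/
theorem exists_lift_of_isLieAbelian_ker (p : L →ₗ⁅K⁆ Q) (hp : Function.Surjective p)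
    [IsLieAbelian p.ker] (σ : S →ₗ⁅K⁆ Q) : ∃ s : S →ₗ⁅K⁆ L, p.comp s = σ := by
  let P : LieSubalgebra K (L × S) :=
    { LinearMap.eqLocus (p ∘ₗ LinearMap.fst K L S) (σ ∘ₗ LinearMap.snd K L S) with
      lie_mem' := fun {x y} hx hy ↦ by
        change p ⁅x.1, y.1⁆ = σ ⁅x.2, y.2⁆
        rw [p.map_lie, σ.map_lie, show p x.1 = σ x.2 from hx, show p y.1 = σ y.2 from hy] }
  let q : P →ₗ⁅K⁆ S := (LieHom.snd K L S).comp P.incl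
  have hq : Function.Surjective q := fun x ↦ by
    obtain ⟨y, hy⟩ := hp (σ x)
    exact ⟨⟨(y, x), hy⟩, rfl⟩
  have hker (x : q.ker) : x.1.1.1 ∈ p.ker ∧ x.1.1.2 = 0 := by
    have hx : x.1.1.2 = 0 := x.2
    refine ⟨?_, hx⟩
    rw [LieHom.mem_ker, show p x.1.1.1 = σ x.1.1.2 from x.1.2, hx, map_zero]
  have : IsLieAbelian q.ker := ⟨fun x y ↦ by
    refine Subtype.ext (Subtype.ext (Prod.ext ?_ ?_))
    · exact congrArg Subtype.val
        (trivial_lie_zero p.ker p.ker ⟨_, (hker x).1⟩ ⟨_, (hker y).1⟩)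
    · exact (hker ⁅x, y⁆).2⟩
  obtain ⟨s, hs⟩ := exists_section_of_isLieAbelian_ker q hq
  refine ⟨((LieHom.fst K L S).comp P.incl).comp s, LieHom.ext fun x ↦ ?_⟩
  exact (s x).2.trans (congrArg σ (hs x))

theorem exists_lift_of_isSolvable_ker (p : L →ₗ⁅K⁆ Q) (hp : Function.Surjective p)
    [IsSolvable p.ker] (σ : S →ₗ⁅K⁆ Q) : ∃ s : S →ₗ⁅K⁆ L, p.comp s = σ := by
  induction hn : finrank K L using Nat.strong_induction_on generalizing L with
  | _ n ih =>
  by_cases hker : p.ker = ⊥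
  · have : IsLieAbelian p.ker := by rw [hker]; infer_instance
    exact exists_lift_of_isLieAbelian_ker p hp σ
  let A : LieIdeal K L := derivedAbelianOfIdeal p.ker
  have hA : A ≠ ⊥ := (abelian_of_solvable_ideal_eq_bot_iff p.ker).not.mpr hker
  have hAker : A ≤ p.ker := by
    unfold A derivedAbelianOfIdeal
    split
    · exact bot_le
    · exact derivedSeriesOfIdeal_le_self p.ker _
  have : IsSolvable (quotientLieLift A p hAker).ker := isSolvable_ker_quotientLieLift hAker
  obtain ⟨s, hs⟩ := ih _ (hn ▸ finrank_quotient_lt_of_ne_bot hA) (quotientLieLift A p hAker)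
    (fun x ↦ (hp x).imp' (quotientLieHom A) fun _ h ↦ h) rfl
  have : IsLieAbelian (quotientLieHom A).ker := by
    rw [ker_quotientLieHom]
    exact abelian_derivedAbelianOfIdeal p.ker
  obtain ⟨t, rfl⟩ := exists_lift_of_isLieAbelian_ker _ (quotientLieHom_surjective A) s
  exact ⟨t, hs⟩

variable (K L) in
/-- A Levi decomposition, encoded as the idempotent endomorphism that projects `L` onto a Levi
subalgebra along the radical. -/
theorem exists_idempotent_ker_eq_radical :
    ∃ τ : L →ₗ⁅K⁆ L, (∀ x, τ (τ x) = τ x) ∧ τ.ker = radical K L := by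
  let π := quotientLieHom (radical K L)
  have : HasTrivialRadical K (L ⧸ radical K L) := hasTrivialRadical_quotient_radical
  have : IsSolvable π.ker := by rw [ker_quotientLieHom]; infer_instance
  obtain ⟨s, hs⟩ := exists_lift_of_isSolvable_ker π (quotientLieHom_surjective _) LieHom.id
  have hπs (x : L ⧸ radical K L) : π (s x) = x := congr($hs x)
  refine ⟨s.comp π, fun x ↦ congrArg s (hπs (π x)), ?_⟩
  refine Eq.trans ?_ (ker_quotientLieHom (radical K L))
  ext x
  simp only [LieHom.mem_ker, LieHom.comp_apply]
  exact ⟨fun h ↦ by rw [← hπs (π x), h, map_zero], fun h ↦ by rw [h, map_zero]⟩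

end Levi

section SolvableIdeal

variable {K L V : Type*} [Field K] [LieRing L] [LieAlgebra K L] [AddCommGroup V] [Module K V]
  [LieRingModule L V] [LieModule K L V]

theorem isNilpotent_toEnd_of_quotient {U : LieSubmodule K L V} {x : L}
    (hU : ∀ v ∈ U, ⁅x, v⁆ = 0) (hx : IsNilpotent (toEnd K L (V ⧸ U) x)) :
    IsNilpotent (toEnd K L V x) := by
  obtain ⟨m, hm⟩ := hx
  refine ⟨m + 1, LinearMap.ext fun v ↦ ?_⟩
  rw [pow_succ', Module.End.mul_apply]
  refine hU _ ((LieSubmodule.Quotient.mk_eq_zero U).mp ?_)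
  have hcomm := Module.End.commute_pow_left_of_commute
    (LieSubmodule.Quotient.toEnd_comp_mk' U x) m
  rw [hm] at hcomm
  exact congr($hcomm.symm v)

theorem isSolvable_baseChange (A : Type*) [CommRing A] [Algebra K A] (I : LieIdeal K L)
    [IsSolvable I] : IsSolvable (I.baseChange A) := by
  obtain ⟨k, hk⟩ := IsSolvable.solvable K I
  refine IsSolvable.mk (R := A) (k := k) ?_
  rw [LieIdeal.derivedSeries_eq_bot_iff] at hk ⊢
  rw [derivedSeriesOfIdeal_baseChange, hk, LieSubmodule.baseChange_bot]

variable [CharZero K]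

/-- On a weight space of `I`, a sum of brackets acts by a scalar and has trace zero. -/
theorem isNilpotent_toEnd_of_isAlgClosed [IsAlgClosed K] [FiniteDimensional K V]
    (I : LieIdeal K L) [IsSolvable I] {x : L} (hxI : x ∈ I)
    (hx : x ∈ ⁅(⊤ : LieIdeal K L), (⊤ : LieIdeal K L)⁆) : IsNilpotent (toEnd K L V x) := by
  induction hn : finrank K V using Nat.strong_induction_on generalizing V with
  | _ n ih =>
  obtain hV | hV := subsingleton_or_nontrivial V
  · exact ⟨1, Subsingleton.elim _ _⟩
  obtain ⟨χ, hχ⟩ := exists_nontrivial_weightSpace_of_isSolvable K I V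
  let W : LieSubmodule K L V := weightSpaceOfIsLieTower K V χ
  have : Nontrivial W := hχ
  have hW (v : V) (hv : v ∈ W) : ⁅x, v⁆ = χ ⟨x, hxI⟩ • v :=
    (mem_weightSpace χ v).mp hv ⟨x, hxI⟩
  have htrace : (finrank K W : K) * χ ⟨x, hxI⟩ = 0 := by
    have hscalar : toEnd K L W x = χ ⟨x, hxI⟩ • LinearMap.id :=
      LinearMap.ext fun w ↦ Subtype.ext (hW w w.2)
    have h := trace_toEnd_eq_zero_of_mem_lcs K L W le_rfl hx
    rwa [hscalar, map_smul, LinearMap.trace_id, smul_eq_mul, mul_comm] at h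
  have hχx : χ ⟨x, hxI⟩ = 0 :=
    (mul_eq_zero.mp htrace).resolve_left (Nat.cast_ne_zero.mpr finrank_pos.ne')
  refine isNilpotent_toEnd_of_quotient (fun v hv ↦ by rw [hW v hv, hχx, zero_smul])
    (ih _ (hn ▸ finrank_quotient_lt_of_ne_bot ?_) rfl)
  exact (LieSubmodule.nontrivial_iff_ne_bot K L V).mp this

theorem isNilpotent_toEnd_of_mem_isSolvable [FiniteDimensional K V]
    (I : LieIdeal K L) [IsSolvable I] {x : L} (hxI : x ∈ I)
    (hx : x ∈ ⁅(⊤ : LieIdeal K L), (⊤ : LieIdeal K L)⁆) : IsNilpotent (toEnd K L V x) := by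
  let A := AlgebraicClosure K
  have hinj : Function.Injective (End.baseChangeHom K A V) :=
    LinearMap.baseChangeHom_injective K V A
  have : IsSolvable (I.baseChange A) := isSolvable_baseChange A I
  rw [← IsNilpotent.map_iff hinj]
  have hxA : (1 : A) ⊗ₜ x ∈ ⁅(⊤ : LieIdeal A (A ⊗[K] L)), (⊤ : LieIdeal A (A ⊗[K] L))⁆ := by
    rw [← LieSubmodule.baseChange_top, ← LieSubmodule.lie_baseChange]
    exact Submodule.tmul_mem_baseChange_of_mem 1 hx
  have hnil : IsNilpotent (toEnd A (A ⊗[K] L) (A ⊗[K] V) ((1 : A) ⊗ₜ x)) :=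
    isNilpotent_toEnd_of_isAlgClosed (I.baseChange A)
      (Submodule.tmul_mem_baseChange_of_mem 1 hxI) hxA
  rwa [toEnd_baseChange] at hnil

theorem isNilpotent_of_isSolvable_of_le [FiniteDimensional K L] (I : LieIdeal K L) [IsSolvable I]
    (hI : I ≤ ⁅(⊤ : LieIdeal K L), (⊤ : LieIdeal K L)⁆) : LieRing.IsNilpotent I := by
  rw [LieAlgebra.isNilpotent_iff_forall (R := K)]
  intro x
  exact LieSubalgebra.isNilpotent_ad_of_isNilpotent_ad I.toLieSubalgebra
    (isNilpotent_toEnd_of_mem_isSolvable I x.2 (hI x.2))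

end SolvableIdeal

section Perfect

variable {K L : Type*} [Field K] [LieRing L] [LieAlgebra K L]

theorem eq_zero_of_forall_lie_eq_zero (hperf : ⁅(⊤ : LieIdeal K L), (⊤ : LieIdeal K L)⁆ = ⊤)
    {V : Type*} [AddCommGroup V] [Module K V] {f : L →ₗ[K] V} (hf : ∀ x y : L, f ⁅x, y⁆ = 0) :
    f = 0 := by
  have hspan : Submodule.span K {⁅x, y⁆ | (x : L) (y : L)} = ⊤ := by
    simpa [LieSubmodule.lieIdeal_oper_eq_linear_span'] using
      congrArg LieSubmodule.toSubmodule hperf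
  refine LinearMap.ext_on hspan ?_
  rintro _ ⟨x, y, rfl⟩
  exact hf x y

theorem isTrivial_of_finrank_le_one (hperf : ⁅(⊤ : LieIdeal K L), (⊤ : LieIdeal K L)⁆ = ⊤)
    {V : Type*} [AddCommGroup V] [Module K V] [LieRingModule L V] [LieModule K L V]
    [FiniteDimensional K V] (hV : finrank K V ≤ 1) : LieModule.IsTrivial L V := by
  obtain ⟨v, hv⟩ := finrank_le_one_iff.mp hV
  have hscalar (φ : Module.End K V) : ∃ c : K, φ = c • 1 := by
    obtain ⟨c, hc⟩ := hv (φ v)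
    refine ⟨c, LinearMap.ext fun w ↦ ?_⟩
    obtain ⟨d, rfl⟩ := hv w
    simp [← hc]
  have hzero : (toEnd K L V : L →ₗ[K] Module.End K V) = 0 := by
    refine eq_zero_of_forall_lie_eq_zero hperf fun x y ↦ ?_
    obtain ⟨c, hc⟩ := hscalar (toEnd K L V x)
    exact (LieHom.map_lie _ x y).trans (by simp [hc, Ring.lie_def])
  exact ⟨fun x m ↦ congr($hzero x m)⟩

theorem ker_eq_bot_of_finrank_ker_le_one [FiniteDimensional K L]
    (hperf : ⁅(⊤ : LieIdeal K L), (⊤ : LieIdeal K L)⁆ = ⊤) {τ : L →ₗ⁅K⁆ L}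
    (hτ : ∀ x, τ (τ x) = τ x) (hker : finrank K τ.ker ≤ 1) : τ.ker = ⊥ := by
  have := isTrivial_of_finrank_le_one hperf hker
  have hmem (x : L) : x - τ x ∈ τ.ker := by simp [hτ]
  have hlie (x y : L) : ⁅x, y⁆ = ⁅x, τ y⁆ := by
    rw [← sub_eq_zero, ← lie_sub]
    exact congrArg Subtype.val (trivial_lie_zero L τ.ker x ⟨_, hmem y⟩)
  have hzero : LinearMap.id - (τ : L →ₗ[K] L) = 0 := by
    refine eq_zero_of_forall_lie_eq_zero hperf fun x y ↦ sub_eq_zero.mpr ?_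
    change ⁅x, y⁆ = τ ⁅x, y⁆
    rw [τ.map_lie, hlie, ← lie_skew, hlie, lie_skew]
  refine (LieSubmodule.eq_bot_iff _).mpr fun x hx ↦ ?_
  rw [← LieHom.mem_ker.mp hx]
  exact sub_eq_zero.mp congr($hzero x)

end Perfect

section Wedge

variable {K M V : Type*} [Field K] [AddCommGroup M] [Module K M] [AddCommGroup V] [Module K V]

/-- The alternating map `ξ ∧ l`. For a character `ξ` and `l` vanishing on `⁅ker ξ, ker ξ⁆` it is the
2-cocycle that obstructs `H²(N, V) = 0` for nilpotent `N`. -/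
def wedge (ξ : M →ₗ[K] K) (l : M →ₗ[K] V) : M →ₗ[K] M →ₗ[K] V :=
  ξ.smulRight l - (ξ.smulRight l).flip

theorem wedge_apply (ξ : M →ₗ[K] K) (l : M →ₗ[K] V) (a b : M) :
    wedge ξ l a b = ξ a • l b - ξ b • l a := rfl

end Wedge

section Nilpotent

variable {K N : Type*} [Field K] [LieRing N] [LieAlgebra K N]

theorem exists_lieCharacter_ne_zero [Nontrivial N] [IsSolvable N] :
    ∃ ξ : LieCharacter K N, ξ ≠ 0 := by
  have hlt : (derivedSeries K N 1).toSubmodule < ⊤ :=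
    derivedSeries_lt_top_of_solvable (R := K) (L := N)
  obtain ⟨ξ, hξ, hker⟩ := Submodule.exists_le_ker_of_lt_top _ hlt
  have hlie (a b : N) : ξ ⁅a, b⁆ = 0 :=
    hker (LieSubmodule.lie_mem_lie (LieSubmodule.mem_top a) (LieSubmodule.mem_top b))
  exact ⟨⟨ξ, fun {a b} ↦ (hlie a b).trans (commute_iff_lie_eq.mp (.all ..)).symm⟩,
    fun h ↦ hξ (LinearMap.ext fun a ↦ congr($h a))⟩

theorem not_le_lie_self_of_isSolvable {I : LieIdeal K N} [IsSolvable I] (hI : I ≠ ⊥) :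
    ¬ I ≤ ⁅I, I⁆ := by
  intro hle
  have hderived (k : ℕ) : I ≤ derivedSeriesOfIdeal K N k I := by
    induction k with
    | zero => simp
    | succ k ih =>
      rw [derivedSeriesOfIdeal_succ]
      exact hle.trans (LieSubmodule.mono_lie ih ih)
  obtain ⟨k, hk⟩ := IsSolvable.solvable K I
  rw [LieIdeal.derivedSeries_eq_bot_iff] at hk
  exact hI (eq_bot_iff.mpr (hk ▸ hderived k))

theorem exists_mem_notMem_lie_mem {V : Type*} [AddCommGroup V] [Module K V] [LieRingModule N V]
    [LieModule K N V] [LieModule.IsNilpotent N V] {U W : LieSubmodule K N V} (h : ¬ U ≤ W)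
    (x : N) : ∃ v ∈ U, v ∉ W ∧ ⁅x, v⁆ ∈ W := by
  by_contra! hstep
  obtain ⟨v, hvU, hvW⟩ := SetLike.not_le_iff_exists.mp h
  have hpow (k : ℕ) : (toEnd K N V x ^ k) v ∈ U ∧ (toEnd K N V x ^ k) v ∉ W := by
    induction k with
    | zero => exact ⟨hvU, hvW⟩
    | succ k ih =>
      rw [pow_succ', Module.End.mul_apply, toEnd_apply_apply]
      exact ⟨U.lie_mem ih.1, hstep _ ih.1 ih.2⟩
  obtain ⟨k, hk⟩ := exists_forall_pow_toEnd_eq_zero K N V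
  exact (hpow k).2 (by simp [hk x])

theorem ker_ne_bot_of_one_lt_finrank [FiniteDimensional K N] (hN : 1 < finrank K N)
    (ξ : LieCharacter K N) : ξ.ker ≠ ⊥ := by
  have hker : LinearMap.ker (ξ : N →ₗ[K] K) ≠ ⊥ :=
    LinearMap.ker_ne_bot_of_finrank_lt (by simpa using hN)
  rwa [← LieHom.ker_toSubmodule, ne_eq, LieSubmodule.toSubmodule_eq_bot] at hker

variable {V : Type*} [AddCommGroup V] [Module K V]
  {ξ : LieCharacter K N} {l : N →ₗ[K] V} {x : N}

theorem apply_lie_eq_of_forall_lie_ker_ker (hl : ∀ a ∈ ⁅ξ.ker, ξ.ker⁆, l a = 0) (hx : ξ x = 1)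
    (a b : N) : l ⁅a, b⁆ = ξ a • l ⁅x, b⁆ - ξ b • l ⁅x, a⁆ := by
  have hmem (c : N) : c - ξ c • x ∈ ξ.ker := by simp [hx]
  have h := hl _ (LieSubmodule.lie_mem_lie (hmem a) (hmem b))
  simp only [lie_sub, sub_lie, smul_lie, lie_smul, lie_self, map_sub, map_smul,
    ← lie_skew a x, map_neg, map_zero] at h
  linear_combination (norm := module) h

variable [LieRingModule N V] [LieModule.IsTrivial N V]

theorem isLieTwoCocycle_wedge (hl : ∀ a ∈ ⁅ξ.ker, ξ.ker⁆, l a = 0) (hx : ξ x = 1) :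
    IsLieTwoCocycle K N (wedge (ξ : N →ₗ[K] K) l) := by
  have hlie := apply_lie_eq_of_forall_lie_ker_ker hl hx
  refine isLieTwoCocycle_iff_of_isTrivial.mpr ⟨fun a ↦ sub_self _, fun a b c ↦ ?_⟩
  simp only [wedge_apply, LieHom.coe_toLinearMap, lieCharacter_apply_lie, zero_smul, zero_sub]
  rw [hlie a b, hlie b c, hlie a c]
  module

theorem not_isLieTwoCoboundary_wedge (hx : ξ x = 1) {i : N} (hi : i ∈ ξ.ker) (hli : l i ≠ 0)
    (hxi : ⁅x, i⁆ ∈ ⁅ξ.ker, ξ.ker⁆) : ¬ IsLieTwoCoboundary K N (wedge (ξ : N →ₗ[K] K) l) := by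
  rw [isLieTwoCoboundary_iff_of_isTrivial]
  rintro ⟨μ, hμ⟩
  have hμker : (⁅ξ.ker, ξ.ker⁆ : LieIdeal K N).toSubmodule ≤ LinearMap.ker μ := by
    rw [LieSubmodule.lieIdeal_oper_eq_linear_span', Submodule.span_le]
    rintro _ ⟨a, ha, b, hb, rfl⟩
    exact (hμ a b).symm.trans
      (by simp [wedge_apply, LieHom.mem_ker.mp ha, LieHom.mem_ker.mp hb])
  have h : wedge (ξ : N →ₗ[K] K) l x i = 0 := (hμ x i).trans (hμker hxi)
  exact hli (by simpa [wedge_apply, hx, LieHom.mem_ker.mp hi] using h)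

theorem not_hasTrivialTwoCohomology_of_isNilpotent [Nontrivial V] [FiniteDimensional K N]
    [LieRing.IsNilpotent N] (hN : 1 < finrank K N) : ¬ HasTrivialTwoCohomology K N V := by
  have : Nontrivial N := nontrivial_of_finrank_pos (R := K) (by lia)
  obtain ⟨ξ, hξ⟩ := exists_lieCharacter_ne_zero (K := K) (N := N)
  obtain ⟨x, hx⟩ := LinearMap.surjective (f := (ξ : N →ₗ[K] K))
    (fun h ↦ hξ (LieHom.ext fun a ↦ congr($h a))) 1
  have hker := not_le_lie_self_of_isSolvable (ker_ne_bot_of_one_lt_finrank hN ξ)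
  obtain ⟨i, hi, hi', hxi⟩ := exists_mem_notMem_lie_mem hker x
  obtain ⟨f, hfi, hf⟩ := Submodule.exists_le_ker_of_notMem
    (p := (⁅ξ.ker, ξ.ker⁆ : LieIdeal K N).toSubmodule) hi'
  obtain ⟨v, hv⟩ := exists_ne (0 : V)
  have hl (a : N) (ha : a ∈ ⁅ξ.ker, ξ.ker⁆) : f.smulRight v a = 0 := by
    simp [LinearMap.mem_ker.mp (hf ha)]
  exact fun h ↦ not_isLieTwoCoboundary_wedge hx hi (by simp [hfi, hv] : f.smulRight v i ≠ 0) hxi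
    (h _ (isLieTwoCocycle_wedge hl hx))

end Nilpotent

section TwoBoundaries

variable {K L : Type*} [Field K] [LieRing L] [LieAlgebra K L] (I : LieIdeal K L)

/-- The span of the tensors `a ⊗ a` and of the image of the Chevalley–Eilenberg boundary, so that
`(I ⊗ I) ⧸ twoBoundaries I` is `Λ²I ⧸ ∂Λ³I`, through which all 2-cocycles of `I` with trivial
coefficients factor. -/
def twoBoundaries : Submodule K (I ⊗[K] I) :=
  Submodule.span K {a ⊗ₜ a | a : I} ⊔
    Submodule.span K {⁅a, b⁆ ⊗ₜ c + ⁅b, c⁆ ⊗ₜ a - ⁅a, c⁆ ⊗ₜ b | (a : I) (b : I) (c : I)}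

variable {I}

theorem tmul_self_mem_twoBoundaries (a : I) : a ⊗ₜ a ∈ twoBoundaries I :=
  Submodule.mem_sup_left (Submodule.subset_span ⟨a, rfl⟩)

theorem lie_tmul_mem_twoBoundaries (a b c : I) :
    ⁅a, b⁆ ⊗ₜ[K] c + ⁅b, c⁆ ⊗ₜ[K] a - ⁅a, c⁆ ⊗ₜ[K] b ∈ twoBoundaries I :=
  Submodule.mem_sup_right (Submodule.subset_span ⟨a, b, c, rfl⟩)

theorem twoBoundaries_le {U : Submodule K (I ⊗[K] I)} (hself : ∀ a : I, a ⊗ₜ a ∈ U)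
    (hlie : ∀ a b c : I, ⁅a, b⁆ ⊗ₜ[K] c + ⁅b, c⁆ ⊗ₜ[K] a - ⁅a, c⁆ ⊗ₜ[K] b ∈ U) :
    twoBoundaries I ≤ U :=
  sup_le (Submodule.span_le.mpr fun _ ⟨a, h⟩ ↦ h ▸ hself a)
    (Submodule.span_le.mpr fun _ ⟨a, b, c, h⟩ ↦ h ▸ hlie a b c)

theorem lie_mem_twoBoundaries (x : L) :
    twoBoundaries I ≤ (twoBoundaries I).comap (toEnd K L (I ⊗[K] I) x) := by
  refine twoBoundaries_le (fun a ↦ ?_) fun a b c ↦ ?_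
  · have h : ⁅x, a ⊗ₜ[K] a⁆ =
        (a + ⁅x, a⁆) ⊗ₜ[K] (a + ⁅x, a⁆) - a ⊗ₜ a - ⁅x, a⁆ ⊗ₜ ⁅x, a⁆ := by
      rw [LieModule.lie_tmul_right, add_tmul, tmul_add, tmul_add]
      abel
    rw [Submodule.mem_comap, toEnd_apply_apply, h]
    exact sub_mem (sub_mem (tmul_self_mem_twoBoundaries _) (tmul_self_mem_twoBoundaries _))
      (tmul_self_mem_twoBoundaries _)
  · have hder (a b : I) : ⁅x, ⁅a, b⁆⁆ = ⁅⁅x, a⁆, b⁆ + ⁅a, ⁅x, b⁆⁆ :=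
      Subtype.ext (leibniz_lie x (a : L) (b : L))
    rw [Submodule.mem_comap, toEnd_apply_apply]
    convert add_mem (add_mem (lie_tmul_mem_twoBoundaries ⁅x, a⁆ b c)
      (lie_tmul_mem_twoBoundaries a ⁅x, b⁆ c)) (lie_tmul_mem_twoBoundaries a b ⁅x, c⁆) using 1
    simp only [lie_add, lie_sub, LieModule.lie_tmul_right, hder, add_tmul]
    abel

variable (I) in
/-- `twoBoundaries I` as a submodule for the action of the whole algebra `L`, of which `I` is an
ideal. -/
def lieTwoBoundaries : LieSubmodule K L (I ⊗[K] I) where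
  __ := twoBoundaries I
  lie_mem {x _} ht := lie_mem_twoBoundaries x ht

variable (I) in
/-- The universal 2-cocycle of `I` with trivial coefficients, `(a, b) ↦ a ∧ b`. -/
def universalTwoCocycle : I →ₗ[K] I →ₗ[K] (I ⊗[K] I) ⧸ lieTwoBoundaries I :=
  (TensorProduct.mk K I I).compr₂ (LieSubmodule.Quotient.mk' (lieTwoBoundaries I) : _ →ₗ[K] _)

theorem universalTwoCocycle_self (a : I) : universalTwoCocycle I a a = 0 :=
  (Submodule.Quotient.mk_eq_zero _).mpr (tmul_self_mem_twoBoundaries a)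

theorem universalTwoCocycle_jacobi (a b c : I) :
    universalTwoCocycle I ⁅a, b⁆ c + universalTwoCocycle I ⁅b, c⁆ a
      - universalTwoCocycle I ⁅a, c⁆ b = 0 :=
  (Submodule.Quotient.mk_eq_zero _).mpr (lie_tmul_mem_twoBoundaries a b c)

theorem lie_universalTwoCocycle (x : L) (a b : I) :
    ⁅x, universalTwoCocycle I a b⁆ =
      universalTwoCocycle I ⁅x, a⁆ b + universalTwoCocycle I a ⁅x, b⁆ :=
  congrArg (LieSubmodule.Quotient.mk' (lieTwoBoundaries I)) (LieModule.lie_tmul_right ..)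

theorem IsLieTwoCocycle.exists_factor {V : Type*} [AddCommGroup V] [Module K V]
    [LieRingModule I V] [LieModule.IsTrivial I V] {z : I →ₗ[K] I →ₗ[K] V}
    (hz : IsLieTwoCocycle K I z) :
    ∃ ψ : (I ⊗[K] I) ⧸ lieTwoBoundaries I →ₗ[K] V,
      ∀ a b, ψ (universalTwoCocycle I a b) = z a b := by
  obtain ⟨halt, hz⟩ := isLieTwoCocycle_iff_of_isTrivial.mp hz
  have hle : twoBoundaries I ≤ LinearMap.ker (TensorProduct.lift z) :=
    twoBoundaries_le (fun a ↦ by simp [halt]) fun a b c ↦ by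
      simpa [sub_eq_zero] using hz a b c
  exact ⟨(twoBoundaries I).liftQ _ hle, fun a b ↦ TensorProduct.lift.tmul a b⟩

end TwoBoundaries

section IdempotentKernel

variable {K L : Type*} [Field K] [LieRing L] [LieAlgebra K L] {τ : L →ₗ⁅K⁆ L}

/-- The projection `x ↦ x - τ x` onto the kernel of an idempotent endomorphism `τ`. -/
def kerProj (hτ : ∀ x, τ (τ x) = τ x) : L →ₗ[K] τ.ker :=
  (LinearMap.id - (τ : L →ₗ[K] L)).codRestrict τ.ker.toSubmodule fun x ↦ by simp [hτ]

variable (hτ : ∀ x, τ (τ x) = τ x)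

theorem coe_kerProj (x : L) : (kerProj hτ x : L) = x - τ x := rfl

theorem kerProj_coe (a : τ.ker) : kerProj hτ a = a :=
  Subtype.ext (by rw [coe_kerProj, LieHom.mem_ker.mp a.2, sub_zero])

theorem kerProj_lie (x y : L) :
    kerProj hτ ⁅x, y⁆ =
      ⁅τ x, kerProj hτ y⁆ - ⁅τ y, kerProj hτ x⁆ + ⁅kerProj hτ x, kerProj hτ y⁆ := by
  refine Subtype.ext ?_
  simp only [coe_kerProj, LieSubmodule.coe_add, LieSubmodule.coe_sub, LieSubmodule.coe_bracket,
    LieIdeal.coe_bracket_of_module, LieHom.map_lie, lie_sub, sub_lie]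
  rw [← lie_skew (τ y) x, ← lie_skew (τ y) (τ x)]
  abel

theorem cocycle_identity_compl₁₂_kerProj {V : Type*} [AddCommGroup V] [Module K V]
    [LieRingModule L V] {w : τ.ker →ₗ[K] τ.ker →ₗ[K] V} (halt : ∀ a, w a a = 0)
    (hw : ∀ a b c, w ⁅a, b⁆ c + w ⁅b, c⁆ a - w ⁅a, c⁆ b = 0)
    (hlie : ∀ (x : L) a b, ⁅x, w a b⁆ = w ⁅x, a⁆ b + w a ⁅x, b⁆) (x y z : L) :
    letI f := w.compl₁₂ (kerProj hτ) (kerProj hτ)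
    ⁅τ x, f y z⁆ - ⁅τ y, f x z⁆ + ⁅τ z, f x y⁆ - f ⁅x, y⁆ z + f ⁅x, z⁆ y - f ⁅y, z⁆ x = 0 := by
  have hskew (a b : τ.ker) : w a b = -w b a := (LinearMap.IsAlt.neg halt b a).symm
  have hjacobi := hw (kerProj hτ x) (kerProj hτ y) (kerProj hτ z)
  simp only [LinearMap.compl₁₂_apply, kerProj_lie, map_add, map_sub, LinearMap.add_apply,
    LinearMap.sub_apply, hlie]
  rw [hskew (kerProj hτ y) ⁅τ x, kerProj hτ z⁆, hskew (kerProj hτ x) ⁅τ y, kerProj hτ z⁆,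
    hskew (kerProj hτ x) ⁅τ z, kerProj hτ y⁆, ← neg_eq_zero, ← hjacobi]
  abel

/-- The inflation `(x, y) ↦ p x ∧ p y` of the universal cocycle along `p = kerProj hτ`, with `L`
acting through `τ`, is a cocycle; a primitive of it restricts to `τ.ker`, where `τ` acts by `0`. -/
theorem IsTwoTrivial.hasTrivialTwoCohomology_ker {K : Type u} {L : Type v} [Field K] [LieRing L]
    [LieAlgebra K L] [FiniteDimensional K L] (h : IsTwoTrivial K L) {τ : L →ₗ⁅K⁆ L}
    (hτ : ∀ x, τ (τ x) = τ x) {V : Type*} [AddCommGroup V] [Module K V] [LieRingModule τ.ker V]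
    [LieModule.IsTrivial τ.ker V] : HasTrivialTwoCohomology K τ.ker V := by
  intro z hz
  obtain ⟨ψ, hψ⟩ := hz.exists_factor
  obtain ⟨g, hg⟩ := h.exists_primitive_comp τ
    ((universalTwoCocycle τ.ker).compl₁₂ (kerProj hτ) (kerProj hτ))
    (fun x ↦ universalTwoCocycle_self _)
    (cocycle_identity_compl₁₂_kerProj hτ universalTwoCocycle_self universalTwoCocycle_jacobi
      lie_universalTwoCocycle)
  refine isLieTwoCoboundary_iff_of_isTrivial.mpr
    ⟨-(ψ ∘ₗ g ∘ₗ τ.ker.toSubmodule.subtype), fun a b ↦ ?_⟩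
  have hab := hg a b
  rw [LinearMap.compl₁₂_apply, kerProj_coe, kerProj_coe, LieHom.mem_ker.mp a.2,
    LieHom.mem_ker.mp b.2, zero_lie, zero_lie, sub_zero, zero_sub] at hab
  rw [← hψ, hab, map_neg]
  rfl

end IdempotentKernel

/-- A 2-trivial Lie algebra `L` over a field of characteristic zero with `⁅L, L⁆ = L`
is semisimple (its solvable radical is zero). -/
theorem isTwoTrivial_perfect_semisimple
    (K : Type u) (L : Type v) [Field K] [CharZero K]
    [LieRing L] [LieAlgebra K L] [FiniteDimensional K L]
    (h2 : IsTwoTrivial K L)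
    (hperf : ⁅(⊤ : LieIdeal K L), (⊤ : LieIdeal K L)⁆ = (⊤ : LieIdeal K L)) :
    LieAlgebra.radical K L = ⊥ := by
  obtain ⟨τ, hτ, hker⟩ := exists_idempotent_ker_eq_radical K L
  have : IsSolvable τ.ker := hker ▸ inferInstance
  have hnil : LieRing.IsNilpotent τ.ker :=
    isNilpotent_of_isSolvable_of_le τ.ker (le_top.trans hperf.ge)
  have hdim : finrank K τ.ker ≤ 1 := by
    by_contra! hlt
    have := (TrivialLieModule.equiv K τ.ker K).toEquiv.nontrivial
    exact not_hasTrivialTwoCohomology_of_isNilpotent hlt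
      (h2.hasTrivialTwoCohomology_ker hτ (V := TrivialLieModule K τ.ker K))
  rw [← hker]
  exact ker_eq_bot_of_finrank_ker_le_one hperf hτ hdim
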